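/- Let L be a first-order language and T a universal L-theory. Let φ(x,y,z) be a quantifier-free L-formula with three free variables. If T ⊨ ∀x ∃y ∀z φ(x,y,z), then there exist k ≥ 1 and L-terms t₁(x), t₂(x,z₁), …, t_k(x,z₁,…,z_{k−1}) (where tᵢ has free variables among x, z₁, …, z_{i−1}) such that T ⊨ ∀x ∀z₁ … ∀z_k [ φ(x, t₁(x), z₁) ∨ φ(x, t₂(x,z₁), z₂) ∨ … ∨ φ(x, t_k(x,z₁,…,z_{k−1}), z_k) ]. -/

import Mathlib

open FirstOrder FirstOrder.Language

universe u v

/-! Provide, besides the variable `x`, a variable `z_t` for every term `t`, where `t` may itself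
mention variables of this kind; `z_t` is the opponent's answer to the proposal `t`. Under any
valuation in a model of `T`, the values of terms form a substructure, which is again a model since
`T` is universal, so the value of some term `t` witnesses `∃y ∀z φ(x,y,z)` there. In particular
`φ(x, t, z_t)` holds in the substructure, and it passes up to the whole model when `φ` is
existential. By compactness finitely many terms `t` suffice for all valuations. A term has
larger rank than every `s` whose answer `z_s` it mentions, so listing these terms by rank makes
`tᵢ` depend only on `x`, on the answers to earlier terms, and on answers to unlisted terms, which
may be given the value of `x`. -/

universe w

section General

variable {L : FirstOrder.Language.{u, v}}

theorem mem_closure_range_iff_exists_term {M α : Type*} [L.Structure M] {e : α → M} {a : M} :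
    a ∈ Substructure.closure L (Set.range e) ↔ ∃ t : L.Term α, t.realize e = a := by
  rw [Substructure.mem_closure_iff_exists_term]
  constructor
  · rintro ⟨t, rfl⟩
    refine ⟨t.relabel (Set.rangeSplitting e), ?_⟩
    rw [Term.realize_relabel, Set.comp_rangeSplitting]
  · rintro ⟨t, rfl⟩
    refine ⟨t.relabel (Set.rangeFactorization e), ?_⟩
    rw [Term.realize_relabel, Set.coe_comp_rangeFactorization]

/-- The theory whose models are the models of `T` with a valuation of the variables `α` under which
every `ψ i` with `i ∈ S` is false; the variables become new constants. -/
def refutationTheory {α ι : Type*} (T : L.Theory) (ψ : ι → L.Formula α) (S : Set ι) :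
    L[[α]].Theory :=
  (L.lhomWithConstants α).onTheory T ∪ (fun i => Formula.equivSentence (ψ i).not) '' S

theorem refutationTheory_mono {α ι : Type*} (T : L.Theory) (ψ : ι → L.Formula α) :
    Monotone (refutationTheory T ψ) := fun _ _ h =>
  Set.union_subset_union_right _ (Set.image_mono h)

theorem isSatisfiable_refutationTheory_iff {α : Type w} {ι : Type*} {T : L.Theory}
    {ψ : ι → L.Formula α} {S : Set ι} :
    (refutationTheory T ψ S).IsSatisfiable ↔
      ∃ (M : Type (max u v w)) (_ : L.Structure M) (_ : Nonempty M), M ⊨ T ∧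
        ∃ e : α → M, ∀ i ∈ S, ¬ (ψ i).Realize e := by
  constructor
  · rintro ⟨N⟩
    let := (L.lhomWithConstants α).reduct N
    have hT : N ⊨ (L.lhomWithConstants α).onTheory T :=
      Theory.Model.mono N.is_model Set.subset_union_left
    refine ⟨N, inferInstance, inferInstance, (LHom.onTheory_model _ T).1 hT,
      fun a => (L.con a : N), fun i hi => ?_⟩
    rw [← Formula.realize_not, ← Formula.realize_equivSentence]
    exact N.is_model.realize_of_mem _ (Or.inr ⟨i, hi, rfl⟩)
  · rintro ⟨M, _, _, hT, e, he⟩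
    let : (constantsOn α).Structure M := constantsOn.structure e
    have : M ⊨ refutationTheory T ψ S := by
      refine Theory.model_union_iff.2 ⟨(LHom.onTheory_model _ T).2 hT, ⟨?_⟩⟩
      rintro _ ⟨i, hi, rfl⟩
      exact (Formula.realize_equivSentence M _).2 (Formula.realize_not.2 (he i hi))
    exact Theory.Model.isSatisfiable M

theorem exists_finset_forall_model_exists_realize {α : Type w} {ι : Type*} (T : L.Theory)
    (ψ : ι → L.Formula α)
    (h : ∀ (M : Type (max u v w)) [L.Structure M] [Nonempty M], M ⊨ T →
      ∀ e : α → M, ∃ i, (ψ i).Realize e) :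
    ∃ S : Finset ι, ∀ (M : Type (max u v w)) [L.Structure M] [Nonempty M], M ⊨ T →
      ∀ e : α → M, ∃ i ∈ S, (ψ i).Realize e := by
  by_contra! hS
  have hdir : Directed (· ⊆ ·) fun S : Finset ι => refutationTheory T ψ S :=
    Monotone.directed_le fun _ _ h => refutationTheory_mono T ψ (Finset.coe_subset.2 h)
  have hsat : Theory.IsSatisfiable (⋃ S : Finset ι, refutationTheory T ψ S) := by
    refine (Theory.isSatisfiable_directed_union_iff hdir).2 fun S => ?_
    obtain ⟨M, _, _, hM, e, he⟩ := hS S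
    exact isSatisfiable_refutationTheory_iff.2 ⟨M, _, ‹_›, hM, e, he⟩
  have hsub : refutationTheory T ψ Set.univ ⊆ ⋃ S : Finset ι, refutationTheory T ψ S := by
    rintro _ (hσ | ⟨i, -, rfl⟩)
    · exact Set.mem_iUnion.2 ⟨∅, Or.inl hσ⟩
    · exact Set.mem_iUnion.2 ⟨{i}, Or.inr ⟨i, by simp, rfl⟩⟩
  obtain ⟨M, _, _, hM, e, he⟩ :=
    isSatisfiable_refutationTheory_iff.1 (Theory.IsSatisfiable.mono hsat hsub)
  obtain ⟨i, hi⟩ := h M hM e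
  exact he i (Set.mem_univ i) hi

theorem exists_mem_forall_mem_realize_of_isExistential {T : L.Theory} [T.IsUniversal]
    {φ : L.Formula (Fin 3)} (hφ : φ.IsExistential)
    (h : ∀ (M : Type w) [L.Structure M] [Nonempty M], M ⊨ T →
      ∀ x : M, ∃ y : M, ∀ z : M, φ.Realize ![x, y, z])
    {M : Type w} [L.Structure M] [M ⊨ T] (N : L.Substructure M) {x : M} (hx : x ∈ N) :
    ∃ y ∈ N, ∀ z ∈ N, φ.Realize ![x, y, z] := by
  have : Nonempty N := ⟨⟨x, hx⟩⟩
  obtain ⟨y, hy⟩ := h N inferInstance ⟨x, hx⟩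
  refine ⟨y, y.2, fun z hz => ?_⟩
  have hMz := hφ.realize_embedding N.subtype (hy ⟨z, hz⟩)
  rw [Formula.Realize]
  convert hMz using 1
  ext i
  fin_cases i <;> rfl

theorem exists_injective_monotone_range_eq {α β : Type*} [LinearOrder β] (S : Finset α)
    (r : α → β) :
    ∃ g : Fin S.card → α, Function.Injective g ∧ Monotone (r ∘ g) ∧ Set.range g = S := by
  let g : Fin S.card → α := fun i => S.equivFin.symm i
  have hg : Set.range g = S :=
    (S.equivFin.symm.surjective.range_comp Subtype.val).trans Subtype.range_coe
  refine ⟨g ∘ Tuple.sort (r ∘ g), ?_, Tuple.monotone_sort (r ∘ g), ?_⟩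
  · exact (Subtype.val_injective.comp S.equivFin.symm.injective).comp (Equiv.injective _)
  · rw [(Equiv.surjective _).range_comp, hg]

end General

/-- The variables of the Herbrand terms for `∀x ∃y ∀z φ(x,y,z)`: the variable `x`, called `input`,
and for each term `t` proposed for `y` a variable `response t` for the `z` that answers it. -/
inductive HerbrandVar (L : FirstOrder.Language.{u, v}) : Type u
  | input : HerbrandVar L
  | response (t : L.Term (HerbrandVar L)) : HerbrandVar L

namespace HerbrandVar

variable {L : FirstOrder.Language.{u, v}} {ι M : Type*}

mutual

/-- The nesting depth of responses in a variable. -/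
def rank : HerbrandVar L → ℕ
  | input => 0
  | response t => termRank t + 1
termination_by structural v => v

/-- The largest rank of a variable that occurs in a term, and `0` for a closed term. -/
def termRank : L.Term (HerbrandVar L) → ℕ
  | Term.var v => rank v
  | Term.func _ ts => Finset.univ.sup fun i => termRank (ts i)
termination_by structural t => t

end

theorem realize_congr_of_rank_le [L.Structure M] {e e' : HerbrandVar L → M}
    (t : L.Term (HerbrandVar L)) (h : ∀ v, rank v ≤ termRank t → e v = e' v) :
    t.realize e = t.realize e' := by
  induction t with
  | var v => exact h v (by rw [termRank])
  | func F ts ih =>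
    rw [Term.realize_func, Term.realize_func]
    congr 1
    funext i
    refine ih i fun v hv => h v (hv.trans ?_)
    rw [termRank]
    exact Finset.le_sup (f := fun i => termRank (ts i)) (Finset.mem_univ i)

/-- The valuation that gives `x` the value `x` and the response to `g i` the value `z i`. Responses
to terms outside the range of `g` get the default value `x`. -/
noncomputable def assign (g : ι → L.Term (HerbrandVar L)) (x : M) (z : ι → M) : HerbrandVar L → M
  | input => x
  | response t => Function.extend g z (fun _ => x) t

theorem comp_assign {N : Type*} (f : M → N) (g : ι → L.Term (HerbrandVar L)) (x : M) (z : ι → M) :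
    f ∘ assign g x z = assign g (f x) (f ∘ z) := by
  funext v
  cases v with
  | input => rfl
  | response t => exact Function.apply_extend f g (fun _ => x) t

theorem assign_response {g : ι → L.Term (HerbrandVar L)} (hg : Function.Injective g) (x : M)
    (z : ι → M) (i : ι) : assign g x z (response (g i)) = z i :=
  hg.extend_apply z (fun _ => x) i

theorem assign_comp_eq {κ : Type*} {g : ι → L.Term (HerbrandVar L)} (hg : Function.Injective g)
    {c : κ → ι} (hc : Function.Injective c) (x : M) (z : ι → M) {v : HerbrandVar L}
    (hv : ∀ i, v = response (g i) → i ∈ Set.range c) :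
    assign (g ∘ c) x (z ∘ c) v = assign g x z v := by
  cases v with
  | input => rfl
  | response t =>
    by_cases ht : ∃ i, g i = t
    · obtain ⟨i, rfl⟩ := ht
      obtain ⟨j, rfl⟩ := hv i rfl
      rw [assign_response hg]
      exact assign_response (hg.comp hc) x (z ∘ c) j
    · have htc : ¬ ∃ j, (g ∘ c) j = t := fun ⟨j, hj⟩ => ht ⟨c j, hj⟩
      rw [assign, assign, Function.extend_apply' _ _ _ ht, Function.extend_apply' _ _ _ htc]

section Witness

variable {k : ℕ} (g : Fin k → L.Term (HerbrandVar L))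

/-- The term `g i` written as a term `tᵢ(x, z₀, …, zᵢ₋₁)`: variable `0` stands for `x` and variable
`j + 1` for the response to `g j`. Any other response is replaced by `x`. -/
noncomputable def witnessTerm (i : Fin k) : L.Term (Fin (i + 1)) :=
  (g i).relabel (assign (g ∘ Fin.castLE i.isLt.le) 0 Fin.succ)

variable {g}

theorem realize_witnessTerm [L.Structure M] (hg : Function.Injective g)
    (hmono : Monotone (termRank ∘ g)) (x : M) (z : Fin k → M) (i : Fin k) :
    (witnessTerm g i).realize (Fin.cases x fun j => z (Fin.castLE i.isLt.le j)) =
      (g i).realize (assign g x z) := by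
  rw [witnessTerm, Term.realize_relabel, comp_assign]
  refine realize_congr_of_rank_le (g i) fun v hv => ?_
  refine assign_comp_eq hg (Fin.castLE_injective i.isLt.le) x z ?_
  rintro j rfl
  have hji : j < i := by
    rw [rank] at hv
    exact hmono.reflect_lt hv
  exact ⟨⟨j, hji⟩, rfl⟩

end Witness

/-- The formula `φ(x, t, z_t)`. -/
def herbrandInstance (φ : L.Formula (Fin 3)) (t : L.Term (HerbrandVar L)) :
    L.Formula (HerbrandVar L) :=
  BoundedFormula.subst φ ![Term.var input, t, Term.var (response t)]

theorem realize_herbrandInstance [L.Structure M] {φ : L.Formula (Fin 3)}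
    {t : L.Term (HerbrandVar L)} {e : HerbrandVar L → M} :
    (herbrandInstance φ t).Realize e ↔ φ.Realize ![e input, t.realize e, e (response t)] := by
  rw [herbrandInstance, Formula.Realize, BoundedFormula.realize_subst, Formula.Realize]
  refine iff_of_eq (congrArg (BoundedFormula.Realize φ · _) ?_)
  ext i
  fin_cases i <;> rfl

theorem exists_realize_herbrandInstance {T : L.Theory} [T.IsUniversal] {φ : L.Formula (Fin 3)}
    (hφ : φ.IsExistential)
    (h : ∀ (M : Type w) [L.Structure M] [Nonempty M], M ⊨ T →
      ∀ x : M, ∃ y : M, ∀ z : M, φ.Realize ![x, y, z])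
    {M : Type w} [L.Structure M] [M ⊨ T] (e : HerbrandVar L → M) :
    ∃ t, (herbrandInstance φ t).Realize e := by
  have he : ∀ v, e v ∈ Substructure.closure L (Set.range e) := fun v =>
    Substructure.subset_closure (Set.mem_range_self v)
  obtain ⟨y, hy, hyz⟩ := exists_mem_forall_mem_realize_of_isExistential hφ h _ (he input)
  obtain ⟨t, rfl⟩ := mem_closure_range_iff_exists_term.1 hy
  exact ⟨t, realize_herbrandInstance.2 (hyz _ (he (response t)))⟩

end HerbrandVar

open HerbrandVar in
theorem kpt_witnessing_general {L : FirstOrder.Language.{u, v}} (T : L.Theory)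
    (hT : T.IsUniversal) (φ : L.Formula (Fin 3)) (hφ : φ.IsExistential)
    (h : ∀ (M : Type (max u v)) [L.Structure M] [Nonempty M], M ⊨ T →
      ∀ x : M, ∃ y : M, ∀ z : M, φ.Realize ![x, y, z]) :
    ∃ k : ℕ, 0 < k ∧ ∃ t : (i : Fin k) → L.Term (Fin (i + 1)),
      ∀ (M : Type (max u v)) [L.Structure M] [Nonempty M], M ⊨ T →
        ∀ (x : M) (z : Fin k → M), ∃ i : Fin k,
          φ.Realize ![x,
            Term.realize (Fin.cases x fun j => z (Fin.castLE i.isLt.le j)) (t i),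
            z i] := by
  classical
  obtain ⟨S, hS⟩ := exists_finset_forall_model_exists_realize T (herbrandInstance φ)
    fun M _ _ _ e => exists_realize_herbrandInstance hφ h e
  -- `S` may be empty when `T` is inconsistent; the extra term keeps `k` positive
  obtain ⟨g, hg, hmono, hrange⟩ :=
    exists_injective_monotone_range_eq (insert (Term.var input) S) termRank
  refine ⟨_, (Finset.insert_nonempty _ S).card_pos, witnessTerm g, fun M _ _ hM x z => ?_⟩
  obtain ⟨t, htS, ht⟩ := hS M hM (assign g x z)
  obtain ⟨i, rfl⟩ : t ∈ Set.range g := hrange ▸ Finset.mem_insert_of_mem htS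
  refine ⟨i, ?_⟩
  rw [realize_witnessTerm hg hmono]
  rwa [realize_herbrandInstance, assign_response hg] at ht

/-- **KPT witnessing theorem.** If a universal theory `T` proves
`∀x ∃y ∀z φ(x,y,z)` for a quantifier-free formula `φ`, then there are finitely
many terms `t₁(x), t₂(x,z₁), …, t_k(x,z₁,…,z_{k−1})` such that `T` proves
`∀x ∀z̄, ⋁ᵢ φ(x, tᵢ(x,z₁,…,z_{i−1}), zᵢ)`. -/
theorem kpt_witnessing {L : FirstOrder.Language.{u, v}} (T : L.Theory) (hT : T.IsUniversal)
    (φ : L.Formula (Fin 3)) (hφ : φ.IsQF)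
    (h : ∀ (M : Type (max u v)) [L.Structure M] [Nonempty M], M ⊨ T →
      ∀ x : M, ∃ y : M, ∀ z : M, φ.Realize ![x, y, z]) :
    ∃ k : ℕ, 0 < k ∧ ∃ t : (i : Fin k) → L.Term (Fin (i + 1)),
      ∀ (M : Type (max u v)) [L.Structure M] [Nonempty M], M ⊨ T →
        ∀ (x : M) (z : Fin k → M), ∃ i : Fin k,
          φ.Realize ![x,
            Term.realize (Fin.cases x fun j => z (Fin.castLE i.isLt.le j)) (t i),
            z i] :=
  kpt_witnessing_general T hT φ hφ.isExistential h
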